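/- Fix 0 < r < 3/4 and γ = 2 (stiff fluid), and define on the interval τ > 0: a(τ)⁻² = e^{4rτ}(sinh 2τ)^{1−2r}, α(τ) = −2r − (1−2r)(cosh 2τ/sinh 2τ), β(τ) = cosh 2τ/sinh 2τ, ρ(τ) = (3−4r)(sinh 2τ)⁻²·a(τ)², π₊(τ) = (4r/3)(cosh 2τ/sinh 2τ − 1)·a(τ)², q₁(τ) = +3π₊(τ). Then for every τ > 0 the equations (E1) α' − 2β' − 2αβ − 2β² = 2a⁻²ρ + 3a⁻²π₊, (E2) 2(α+β) = a⁻²q₁, (E3) −α' − 2αβ − 2 = 3a⁻²π₊, (E4) β' + 2β² − 2 = 0 hold, with ρ > 0 and π₊ > 0. This is the right-handed stiff-fluid LRS Einstein–Maxwell solution; the restriction r < 3/4 is exactly the positivity condition for ρ. -/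

import Mathlib

/-!
Everything is a polynomial in `β = coth 2τ`. The Riccati equation `β' = 2(1 - β²)` is (E4), and
since `α = -2r - (1 - 2r)β` it also determines `α'`. The sources enter only through
`a⁻²ρ = (3 - 4r)(β² - 1)`, which uses `sinh⁻² = coth² - 1`, and `a⁻²π₊ = (4r/3)(β - 1)`, so
(E1)–(E3) become polynomial identities in `β` and `r`.
-/

section HyperbolicCotangent

variable {x : ℝ}

lemma one_lt_cosh_div_sinh (hx : 0 < x) : 1 < Real.cosh x / Real.sinh x :=
  (one_lt_div (Real.sinh_pos_iff.mpr hx)).mpr (Real.sinh_lt_cosh x)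

lemma sinh_zpow_neg_two (hx : x ≠ 0) :
    Real.sinh x ^ (-2 : ℤ) = (Real.cosh x / Real.sinh x) ^ 2 - 1 := by
  have hsinh : Real.sinh x ^ 2 ≠ 0 := pow_ne_zero 2 (Real.sinh_ne_zero.mpr hx)
  calc Real.sinh x ^ (-2 : ℤ)
      = 1 / Real.sinh x ^ 2 := by rw [zpow_neg, one_div]; rfl
    _ = (Real.cosh x ^ 2 - Real.sinh x ^ 2) / Real.sinh x ^ 2 := by
        rw [Real.cosh_sq_sub_sinh_sq]
    _ = (Real.cosh x / Real.sinh x) ^ 2 - 1 := by rw [sub_div, div_self hsinh, div_pow]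

lemma hasDerivAt_cosh_div_sinh (hx : x ≠ 0) :
    HasDerivAt (fun t => Real.cosh t / Real.sinh t) (1 - (Real.cosh x / Real.sinh x) ^ 2) x := by
  have hsinh : Real.sinh x ≠ 0 := Real.sinh_ne_zero.mpr hx
  have hquotient := (Real.hasDerivAt_cosh x).fun_div (Real.hasDerivAt_sinh x) hsinh
  refine hquotient.congr_deriv ?_
  field_simp

lemma hasDerivAt_cosh_div_sinh_const_mul {k : ℝ} (hkx : k * x ≠ 0) :
    HasDerivAt (fun t => Real.cosh (k * t) / Real.sinh (k * t))
      (k * (1 - (Real.cosh (k * x) / Real.sinh (k * x)) ^ 2)) x := by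
  have hlin : HasDerivAt (fun t => k * t) k x := hasDerivAt_const_mul k
  exact ((hasDerivAt_cosh_div_sinh hkx).comp x hlin).congr_deriv (mul_comm _ _)

end HyperbolicCotangent

section FieldEquations

variable {r τ A ρ π : ℝ} {α β : ℝ → ℝ}

lemma deriv_alpha_of_riccati (hα : α = fun t => -2 * r - (1 - 2 * r) * β t)
    (hβ : HasDerivAt β (2 * (1 - β τ ^ 2)) τ) :
    deriv α τ = -((1 - 2 * r) * (2 * (1 - β τ ^ 2))) :=
  hα ▸ ((hβ.const_mul (1 - 2 * r)).const_sub (-2 * r)).deriv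

lemma field_equation_E1 (hα : α = fun t => -2 * r - (1 - 2 * r) * β t)
    (hβ : HasDerivAt β (2 * (1 - β τ ^ 2)) τ)
    (hρ : A * ρ = (3 - 4 * r) * (β τ ^ 2 - 1)) (hπ : A * π = 4 * r / 3 * (β τ - 1)) :
    deriv α τ - 2 * deriv β τ - 2 * α τ * β τ - 2 * β τ ^ 2 = 2 * A * ρ + 3 * A * π := by
  rw [deriv_alpha_of_riccati hα hβ, hβ.deriv, congrFun hα τ]
  linear_combination -2 * hρ - 3 * hπ

lemma field_equation_E2 (hα : α = fun t => -2 * r - (1 - 2 * r) * β t)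
    (hπ : A * π = 4 * r / 3 * (β τ - 1)) :
    2 * (α τ + β τ) = A * (3 * π) := by
  rw [congrFun hα τ]
  linear_combination -3 * hπ

lemma field_equation_E3 (hα : α = fun t => -2 * r - (1 - 2 * r) * β t)
    (hβ : HasDerivAt β (2 * (1 - β τ ^ 2)) τ) (hπ : A * π = 4 * r / 3 * (β τ - 1)) :
    -deriv α τ - 2 * α τ * β τ - 2 = 3 * A * π := by
  rw [deriv_alpha_of_riccati hα hβ, congrFun hα τ]
  linear_combination -3 * hπ

lemma field_equation_E4 (hβ : HasDerivAt β (2 * (1 - β τ ^ 2)) τ) :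
    deriv β τ + 2 * β τ ^ 2 - 2 = 0 := by
  rw [hβ.deriv]
  ring

end FieldEquations

/-- The right-handed stiff-fluid (γ = 2) LRS Einstein–Maxwell
solution: with `a⁻² = e^{4rτ}(sinh 2τ)^{1−2r}`,
`α = −2r − (1−2r)coth 2τ`, `β = coth 2τ`, `ρ = (3−4r)(sinh 2τ)⁻²·a²`,
`π₊ = (4r/3)(coth 2τ − 1)·a²`, `q₁ = +3π₊` (0 < r < 3/4), the equations
(E1)–(E4) with γ = 2 hold for every `τ > 0`, with `ρ > 0` and `π₊ > 0`. -/
theorem stmt_17 (r : ℝ) (hr0 : 0 < r) (hr1 : r < 3 / 4)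
    (a2inv α β ρ πp q1 : ℝ → ℝ)
    (ha : a2inv = fun τ => Real.exp (4 * r * τ) * Real.sinh (2 * τ) ^ ((1 - 2 * r) : ℝ))
    (hα : α = fun τ => -2 * r - (1 - 2 * r) * (Real.cosh (2 * τ) / Real.sinh (2 * τ)))
    (hβ : β = fun τ => Real.cosh (2 * τ) / Real.sinh (2 * τ))
    (hρ : ρ = fun τ => (3 - 4 * r) * (Real.sinh (2 * τ)) ^ (-2 : ℤ) * (a2inv τ)⁻¹)
    (hπ : πp = fun τ => (4 * r / 3) * (Real.cosh (2 * τ) / Real.sinh (2 * τ) - 1)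
      * (a2inv τ)⁻¹)
    (hq1 : q1 = fun τ => 3 * πp τ) :
    ∀ τ : ℝ, 0 < τ →
      (deriv α τ - 2 * deriv β τ - 2 * α τ * β τ - 2 * (β τ) ^ 2
        = 2 * a2inv τ * ρ τ + 3 * a2inv τ * πp τ) ∧
      (2 * (α τ + β τ) = a2inv τ * q1 τ) ∧
      (-deriv α τ - 2 * α τ * β τ - 2 = 3 * a2inv τ * πp τ) ∧
      (deriv β τ + 2 * (β τ) ^ 2 - 2 = 0) ∧
      0 < ρ τ ∧ 0 < πp τ := by
  intro τ hτ
  have h2τ : 0 < 2 * τ := by positivity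
  have hsinh : 0 < Real.sinh (2 * τ) := Real.sinh_pos_iff.mpr h2τ
  have hA : 0 < a2inv τ := by
    rw [ha]; exact mul_pos (Real.exp_pos _) (Real.rpow_pos_of_pos hsinh _)
  have hβ' : HasDerivAt β (2 * (1 - β τ ^ 2)) τ := by
    rw [hβ]; exact hasDerivAt_cosh_div_sinh_const_mul h2τ.ne'
  have hβ_gt : 0 < β τ - 1 := by
    rw [hβ]; exact sub_pos.mpr (one_lt_cosh_div_sinh h2τ)
  have hαβ : α = fun t => -2 * r - (1 - 2 * r) * β t := by rw [hα, hβ]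
  have hρτ : ρ τ = (3 - 4 * r) * Real.sinh (2 * τ) ^ (-2 : ℤ) * (a2inv τ)⁻¹ := congrFun hρ τ
  have hπτ : πp τ = 4 * r / 3 * (β τ - 1) * (a2inv τ)⁻¹ := by rw [hπ, hβ]
  have hAρ : a2inv τ * ρ τ = (3 - 4 * r) * (β τ ^ 2 - 1) := by
    rw [hρτ, sinh_zpow_neg_two h2τ.ne', mul_comm, inv_mul_cancel_right₀ hA.ne', hβ]
  have hAπ : a2inv τ * πp τ = 4 * r / 3 * (β τ - 1) := by
    rw [hπτ, mul_comm, inv_mul_cancel_right₀ hA.ne']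
  have hr : 0 < 3 - 4 * r := by linarith
  refine ⟨field_equation_E1 hαβ hβ' hAρ hAπ, ?_, field_equation_E3 hαβ hβ' hAπ,
    field_equation_E4 hβ', ?_, ?_⟩
  · rw [hq1]; exact field_equation_E2 hαβ hAπ
  · rw [hρτ]; positivity
  · rw [hπτ]; positivity
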